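/- arXiv:2205.05080 — 2 statements merged into one kernel-verified Lean document; each statement's English description precedes it below -/
import Mathlib

section
/- Assume the Euler-discretized MCARMA state space system (hypothesis (i) of the context). Then for every l ∈ {1,…,p−1}, every k ∈ {1,…,d} and every t ∈ ℝ, writing Q_1^{(l)} = (l−1)d + k, the approximated solution satisfies x_{Q_1^{(l)}+d}(t) = h^{−l} Σ_{n=0}^{l} (−1)^n C(l,n) x_k( t + (l−n)h ) − Σ_{w=0}^{l−1} h^{−(w+1)} Σ_{r=1}^{m} β_{(k−1)m+r}^{(p−l+w)} Σ_{v=0}^{w} (−1)^v C(w,v) ΔL_r( t + (w−v)h ), where C(·,·) denotes binomial coefficients. -/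
/-!
For a fixed component `k`, hypothesis (i) is the inhomogeneous linear recursion
`y (i + 1) = D (y i) - h⁻¹ • u i`, where `y i` is the component in block `i + 1`, `u i` is the noise
entering that block and `D = h⁻¹ • Δ_[h]` is the forward difference quotient. The discrete Duhamel
formula gives `y l = D ^ l (y 0) - ∑ w < l, D ^ w (h⁻¹ • u (l - 1 - w))`, and the binomial expansion
of the iterated differences turns this into the claimed formula.
-/

open Finset fwdDiff

theorem linearRecurrence_eq_pow_sub_sum {R V : Type*} [Semiring R] [AddCommGroup V] [Module R V]
    (T : Module.End R V) {y u : ℕ → V} {N : ℕ} (hy : ∀ i < N, y (i + 1) = T (y i) - u i) :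
    ∀ l ≤ N, y l = (T ^ l) (y 0) - ∑ w ∈ range l, (T ^ w) (u (l - 1 - w)) := by
  intro l
  induction l with
  | zero => simp
  | succ l ih =>
    intro hl
    have shifted_sum : ∑ w ∈ range (l + 1), (T ^ w) (u (l + 1 - 1 - w)) =
        T (∑ w ∈ range l, (T ^ w) (u (l - 1 - w))) + u l := by
      simp [sum_range_succ', pow_succ', Nat.sub_sub, add_comm 1]
    rw [hy l hl, ih (by lia), shifted_sum, map_sub, pow_succ', Module.End.mul_apply, sub_sub]

theorem fwdDiff_iter_eq_sum_neg_one_pow_mul_choose_smul {A R V : Type*} [Ring A] [Ring R]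
    [AddCommGroup V] [Module R V] (h : A) (f : A → V) (l : ℕ) (t : A) :
    (Δ_[h])^[l] f t =
      ∑ n ∈ range (l + 1), ((-1 : R) ^ n * (l.choose n : R)) • f (t + ((l : A) - n) * h) := by
  rw [fwdDiff_iter_eq_sum_shift, ← sum_range_reflect]
  refine sum_congr rfl fun n hn ↦ ?_
  have hnl : n ≤ l := mem_range_succ_iff.mp hn
  rw [Nat.add_sub_cancel, Nat.sub_sub_self hnl, Nat.choose_symm hnl, nsmul_eq_mul,
    Nat.cast_sub hnl, ← Int.cast_smul_eq_zsmul R]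
  push_cast
  rfl

section DifferenceQuotient

variable {K V : Type*} [Field K] [AddCommGroup V] [Module K V]

/-- The forward difference quotient `f ↦ (t ↦ h⁻¹ • (f (t + h) - f t))` as a linear operator, so
that its powers are the iterated difference quotients. It is the zero operator for `h = 0`. -/
def fwdDiffQuotient (h : K) : Module.End K (K → V) where
  toFun f := h⁻¹ • Δ_[h] f
  map_add' f g := by rw [fwdDiff_add, smul_add]
  map_smul' c f := by rw [fwdDiff_const_smul, smul_comm, RingHom.id_apply]

theorem fwdDiffQuotient_apply (h : K) (f : K → V) : fwdDiffQuotient h f = h⁻¹ • Δ_[h] f := rfl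

theorem fwdDiffQuotient_pow_apply (h : K) (l : ℕ) (f : K → V) :
    (fwdDiffQuotient h ^ l) f = (h ^ l)⁻¹ • (Δ_[h])^[l] f := by
  induction l with
  | zero => simp
  | succ l ih =>
    rw [pow_succ', Module.End.mul_apply, ih, fwdDiffQuotient_apply, fwdDiff_const_smul, smul_smul,
      Function.iterate_succ_apply', pow_succ', mul_inv]

theorem eulerRecurrence_eq_fwdDiff_iter_sub_sum {h : K} (hh : h ≠ 0) {y u : ℕ → K → V} {N : ℕ}
    (hy : ∀ i < N, h • y (i + 1) = Δ_[h] (y i) - u i) {l : ℕ} (hl : l ≤ N) :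
    y l = (h ^ l)⁻¹ • (Δ_[h])^[l] (y 0) -
      ∑ w ∈ range l, (h ^ (w + 1))⁻¹ • (Δ_[h])^[w] (u (l - 1 - w)) := by
  have recurrence : ∀ i < N, y (i + 1) = fwdDiffQuotient h (y i) - h⁻¹ • u i := fun i hi ↦ by
    rw [fwdDiffQuotient_apply, ← smul_sub, ← hy i hi, inv_smul_smul₀ hh]
  have duhamel := linearRecurrence_eq_pow_sub_sum (u := fun i ↦ h⁻¹ • u i)
    (fwdDiffQuotient h) recurrence l hl
  simpa only [map_smul, fwdDiffQuotient_pow_apply, smul_smul, ← mul_inv, ← pow_succ'] using duhamel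

theorem mcarma_euler_recursive_solution_general (p d m : ℕ) {h : K} (hh : h ≠ 0)
    (βc : ℕ → ℕ → K) (x ΔL : ℕ → K → V)
    (hi : ∀ b k : ℕ, 1 ≤ b → b ≤ p - 1 → 1 ≤ k → k ≤ d → ∀ t : K,
      h • x ((b - 1) * d + k + d) t
        = x ((b - 1) * d + k) (t + h) - x ((b - 1) * d + k) t
            - ∑ r ∈ Icc 1 m, βc (p - b) ((k - 1) * m + r) • ΔL r t) :
    ∀ l k : ℕ, 1 ≤ l → l ≤ p - 1 → 1 ≤ k → k ≤ d → ∀ t : K,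
      x ((l - 1) * d + k + d) t
        = (h ^ l)⁻¹ • ∑ n ∈ range (l + 1),
            ((-1 : K) ^ n * (l.choose n : K)) • x k (t + ((l : K) - n) * h)
          - ∑ w ∈ range l, (h ^ (w + 1))⁻¹ •
              ∑ r ∈ Icc 1 m, βc (p - l + w) ((k - 1) * m + r) •
                ∑ v ∈ range (w + 1),
                  ((-1 : K) ^ v * (w.choose v : K)) • ΔL r (t + ((w : K) - v) * h) := by
  intro l k hl hlp hk hkd t
  have next_block (i : ℕ) : i * d + k + d = (i + 1) * d + k := by ring
  let noise (κ : ℕ) : K → V := ∑ r ∈ Icc 1 m, βc κ ((k - 1) * m + r) • ΔL r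
  have euler_step : ∀ i < p - 1,
      h • x ((i + 1) * d + k) = Δ_[h] (x (i * d + k)) - noise (p - (i + 1)) := fun i hip ↦ by
    ext t
    simpa [next_block, noise, fwdDiff] using hi (i + 1) k (by lia) hip hk hkd t
  have noise_index : ∀ w ∈ range l, p - (l - 1 - w + 1) = p - l + w := fun w hw ↦ by
    have := mem_range.mp hw
    lia
  have solution := congrFun (eulerRecurrence_eq_fwdDiff_iter_sub_sum
    (y := fun i ↦ x (i * d + k)) (u := fun i ↦ noise (p - (i + 1))) hh euler_step hlp) t
  rw [next_block, Nat.sub_add_cancel hl, solution,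
    sum_congr rfl fun w hw ↦ by rw [noise_index w hw]]
  simp [noise, fwdDiff_iter_eq_sum_neg_one_pow_mul_choose_smul (R := K)]

end DifferenceQuotient

/-- **Lemma 1 of the paper.**
Fix `p ≥ 2`, `d ≥ 1`, `m ≥ 1` and a step size `h ∈ (0,1]`.  Coefficients
`αc j ((k-1)d+s)` (the `(k,s)` entry of `A_j`) and `βc κ ((k-1)m+r)` (the `(k,r)` entry
of `β_{p−κ}`) are given, together with functions `x 1, …, x (pd) : ℝ → ℝ` and
`ΔL 1, …, ΔL m : ℝ → ℝ` satisfying hypothesis (i) of the Euler-discretized MCARMA state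
space system.  Then for every `l ∈ {1,…,p−1}`, `k ∈ {1,…,d}` and `t ∈ ℝ`, with
`Q_1^{(l)} = (l−1)d + k`:
`x (Q_1^{(l)} + d) t = h^{−l} ∑_{n=0}^{l} (−1)^n C(l,n) x k (t+(l−n)h)`
`− ∑_{w=0}^{l−1} h^{−(w+1)} ∑_{r=1}^{m} βc^{(p−l+w)}_{(k−1)m+r}`
`∑_{v=0}^{w} (−1)^v C(w,v) ΔL r (t+(w−v)h)`. -/
theorem mcarma_euler_recursive_solution
    (p d m : ℕ) (hp : 2 ≤ p) (hd : 1 ≤ d) (hm : 1 ≤ m)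
    (h : ℝ) (hh0 : 0 < h) (hh1 : h ≤ 1)
    (αc : ℕ → ℕ → ℝ) (βc : ℕ → ℕ → ℝ)
    (x : ℕ → ℝ → ℝ) (ΔL : ℕ → ℝ → ℝ)
    -- (i) Euler-discretized recursive equations (blocks 1,…,p−1)
    (hi : ∀ b k : ℕ, 1 ≤ b → b ≤ p - 1 → 1 ≤ k → k ≤ d → ∀ t : ℝ,
      x ((b - 1) * d + k + d) t
        = (x ((b - 1) * d + k) (t + h) - x ((b - 1) * d + k) t
            - ∑ r ∈ Finset.Icc 1 m, βc (p - b) ((k - 1) * m + r) * ΔL r t) / h) :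
    ∀ l k : ℕ, 1 ≤ l → l ≤ p - 1 → 1 ≤ k → k ≤ d → ∀ t : ℝ,
      x ((l - 1) * d + k + d) t
        = (h ^ l)⁻¹ * ∑ n ∈ Finset.range (l + 1),
            (-1 : ℝ) ^ n * (l.choose n : ℝ) * x k (t + ((l : ℝ) - n) * h)
          - ∑ w ∈ Finset.range l, (h ^ (w + 1))⁻¹ *
              ∑ r ∈ Finset.Icc 1 m, βc (p - l + w) ((k - 1) * m + r) *
                ∑ v ∈ Finset.range (w + 1),
                  (-1 : ℝ) ^ v * (w.choose v : ℝ) * ΔL r (t + ((w : ℝ) - v) * h) := by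
  exact mcarma_euler_recursive_solution_general p d m hh0.ne' βc x ΔL fun b k hb hbp hk hkd t ↦ by
    simp only [hi b k hb hbp hk hkd t, smul_eq_mul, mul_div_cancel₀ _ hh0.ne']
end

section
/- Assume the Euler-discretized MCARMA state space system (hypotheses (i) and (ii) of the context). Then for every k ∈ {1,…,d} and every t ∈ ℝ the multivariate ARMA/CARMA transformation relation holds: x_k(t+ph) = x_k(t+(p−1)h) − h^p Σ_{s=1}^{d} α_{(k−1)d+s}^{(p)} x_s(t) + h^{p−1} Σ_{r=1}^{m} β_{(k−1)m+r}^{(0)} ΔL_r(t) − Σ_{l=2}^{p} Σ_{s=1}^{d} α_{(k−1)d+s}^{(p−l+1)} ( h^{p−l+1} Σ_{n=0}^{l−1} (−1)^n C(l−1,n) x_s(t+(l−1−n)h) − Σ_{w=0}^{l−2} h^{p−w−1} Σ_{r=1}^{m} β_{(s−1)m+r}^{(p−l+w+1)} Σ_{v=0}^{w} (−1)^v C(w,v) ΔL_r(t+(w−v)h) ) − Σ_{n=1}^{p−1} (−1)^n C(p−1,n) ( x_k(t+(p−n)h) − x_k(t+(p−1−n)h) ) + Σ_{w=0}^{p−2}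 h^{p−w−2} Σ_{r=1}^{m} β_{(k−1)m+r}^{(w+1)} Σ_{v=0}^{w} (−1)^v C(w,v) ( ΔL_r(t+(w−v+1)h) − ΔL_r(t+(w−v)h) ), where C(·,·) denotes binomial coefficients. In particular, x_k(t+ph) is a linear combination of the 0 to p−1 lagged values of x_1,…,x_d and of the increments ΔL_1,…,ΔL_m, i.e. the approximated solution is a VARMA process. -/
/-!
With `Δ` the forward difference of step `h`, the recursive equations read
`h • x_{j+1} = Δ x_j - u_j`, where `x_j` is the `j`-th block of the state, counted from `0`, and
`u_j` is its noise input. Iterating them expresses every block through the observed one: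
`h ^ j • x_j = Δ^j x_0 - ∑_{w < j} h ^ (j - 1 - w) • Δ^w u_{j-1-w}`.
Applying `Δ` to this identity for the last block `x_q`, `q = p - 1`, turns the autoregressive
equation multiplied by `h ^ q` into an equation for `Δ^p x_0` in which every `h ^ p • x_j` can be
replaced in the same way. The binomial expansion of the iterated differences then gives the
relation.
-/

open Finset fwdDiff

theorem sum_Icc_eq_sum_range {M : Type*} [AddCommMonoid M] (f : ℕ → M) (a b : ℕ) :
    ∑ l ∈ Icc a b, f l = ∑ j ∈ range (b + 1 - a), f (j + a) := by
  simp only [← Ico_add_one_right_eq_Icc, sum_Ico_eq_sum_range, add_comm a]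

theorem fwdDiff_sub {M G : Type*} [AddCommMonoid M] [AddCommGroup G] (h : M) (f g : M → G) :
    Δ_[h] (f - g) = Δ_[h] f - Δ_[h] g :=
  sub_sub_sub_comm ..

section BinomialExpansion

variable {R S : Type*} [Ring R] [Ring S] (h : R) (f : R → S) (n : ℕ) (t : R)

theorem fwdDiff_iter_eq_sum_neg_one_pow_mul :
    Δ_[h] ^[n] f t =
      ∑ v ∈ range (n + 1), (-1 : S) ^ v * (n.choose v : S) * f (t + ((n : R) - v) * h) := by
  rw [fwdDiff_iter_eq_sum_shift, ← sum_range_reflect]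
  refine sum_congr rfl fun v hv => ?_
  have hvn : v ≤ n := mem_range_succ_iff.mp hv
  rw [Nat.add_sub_cancel, Nat.sub_sub_self hvn, Nat.choose_symm hvn, nsmul_eq_mul,
    Nat.cast_sub hvn, zsmul_eq_mul]
  push_cast
  rfl

theorem fwdDiff_iter_succ_eq_sum_neg_one_pow_mul :
    Δ_[h] ^[n + 1] f t =
      ∑ v ∈ range (n + 1), (-1 : S) ^ v * (n.choose v : S) *
        (f (t + ((n : R) - v + 1) * h) - f (t + ((n : R) - v) * h)) := by
  rw [Function.iterate_succ_apply, fwdDiff_iter_eq_sum_neg_one_pow_mul]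
  simp only [fwdDiff, add_mul, one_mul, add_assoc]

theorem fwdDiff_iter_succ_eq_sub_add_sum_Icc :
    Δ_[h] ^[n + 1] f t =
      f (t + ((n : R) + 1) * h) - f (t + (n : R) * h)
        + ∑ v ∈ Icc 1 n, (-1 : S) ^ v * (n.choose v : S) *
            (f (t + ((n : R) + 1 - v) * h) - f (t + ((n : R) - v) * h)) := by
  rw [fwdDiff_iter_succ_eq_sum_neg_one_pow_mul, sum_range_succ', sum_Icc_eq_sum_range]
  simp [add_comm, add_sub_right_comm]

end BinomialExpansion

section EulerSystem

variable {R T V ι ρ : Type*} [CommRing R] [AddCommMonoid T] [AddCommGroup V] [Module R V]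
  {h : R} {τ : T} {q : ℕ}

theorem pow_smul_eq_fwdDiff_iter_sub_sum {y u : ℕ → T → V}
    (hy : ∀ j < q, h • y (j + 1) = Δ_[τ] (y j) - u j) {j : ℕ} (hj : j ≤ q) :
    h ^ j • y j =
      Δ_[τ] ^[j] (y 0) - ∑ w ∈ range j, h ^ (j - 1 - w) • Δ_[τ] ^[w] (u (j - 1 - w)) := by
  induction j with
  | zero => simp
  | succ j ih =>
    calc h ^ (j + 1) • y (j + 1)
        = Δ_[τ] (h ^ j • y j) - h ^ j • u j := by
          rw [pow_succ, mul_smul, hy j hj, smul_sub, fwdDiff_const_smul]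
      _ = Δ_[τ] ^[j + 1] (y 0)
            - (∑ w ∈ range j, h ^ (j - 1 - w) • Δ_[τ] ^[w + 1] (u (j - 1 - w)) + h ^ j • u j) := by
          simp only [ih (by omega), fwdDiff_sub, fwdDiff_finsetSum, fwdDiff_const_smul,
            ← Function.iterate_succ_apply', sub_sub]
      _ = _ := by
          simp [sum_range_succ', Nat.sub_sub, add_comm 1]

variable {N : Finset ρ} {L : ρ → T → V}

section Component

variable {y : ℕ → T → V} {b : ℕ → ρ → R}

theorem pow_smul_state_eq_of_euler_recursion
    (hrec : ∀ j < q, h • y (j + 1) = Δ_[τ] (y j) - ∑ r ∈ N, b (q - j) r • L r)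
    {j : ℕ} (hj : j ≤ q) :
    h ^ j • y j =
      Δ_[τ] ^[j] (y 0) - ∑ w ∈ range j, h ^ (j - 1 - w) •
        ∑ r ∈ N, b (q - j + w + 1) r • Δ_[τ] ^[w] (L r) := by
  rw [pow_smul_eq_fwdDiff_iter_sub_sum hrec hj]
  congr 1
  refine sum_congr rfl fun w hw => ?_
  have hindex : q - (j - 1 - w) = q - j + w + 1 := by have := mem_range.mp hw; omega
  simp only [hindex, fwdDiff_iter_finsetSum, fwdDiff_iter_const_smul]

theorem pow_succ_smul_state_eq_of_euler_recursion
    (hrec : ∀ j < q, h • y (j + 1) = Δ_[τ] (y j) - ∑ r ∈ N, b (q - j) r • L r)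
    {j : ℕ} (hj : j ≤ q) :
    h ^ (q + 1) • y j =
      h ^ (q - j + 1) • Δ_[τ] ^[j] (y 0)
        - ∑ w ∈ range j, h ^ (q - w) • ∑ r ∈ N, b (q - j + w + 1) r • Δ_[τ] ^[w] (L r) := by
  rw [show q + 1 = (q - j + 1) + j by omega, pow_add, mul_smul,
    pow_smul_state_eq_of_euler_recursion hrec hj, smul_sub, smul_sum]
  congr 1
  refine sum_congr rfl fun w hw => ?_
  have hexponent : q - j + 1 + (j - 1 - w) = q - w := by have := mem_range.mp hw; omega
  rw [smul_smul, ← pow_add, hexponent]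

theorem fwdDiff_iter_succ_eq_of_euler_recursion
    (hrec : ∀ j < q, h • y (j + 1) = Δ_[τ] (y j) - ∑ r ∈ N, b (q - j) r • L r) :
    Δ_[τ] ^[q + 1] (y 0) =
      h ^ q • Δ_[τ] (y q)
        + ∑ w ∈ range q, h ^ (q - 1 - w) • ∑ r ∈ N, b (w + 1) r • Δ_[τ] ^[w + 1] (L r) := by
  have hlast_block :=
    eq_add_of_sub_eq (pow_smul_state_eq_of_euler_recursion hrec le_rfl).symm
  simpa only [← Function.iterate_succ_apply', fwdDiff_add, fwdDiff_finsetSum,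
    fwdDiff_const_smul, Nat.sub_self, zero_add] using congrArg Δ_[τ] hlast_block

end Component

theorem fwdDiff_iter_eq_of_euler_system {S : Finset ι} {y : ℕ → ι → T → V}
    {a : ℕ → ι → R} {b : ℕ → ι → ρ → R} {k : ι} (hk : k ∈ S)
    (hrec : ∀ j < q, ∀ s ∈ S,
      h • y (j + 1) s = Δ_[τ] (y j s) - ∑ r ∈ N, b (q - j) s r • L r)
    (hlast : Δ_[τ] (y q k) =
      -h • ∑ j ∈ range (q + 1), ∑ s ∈ S, a (q - j + 1) s • y j s + ∑ r ∈ N, b 0 k r • L r) :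
    Δ_[τ] ^[q + 1] (y 0 k) =
      h ^ q • ∑ r ∈ N, b 0 k r • L r
        - ∑ j ∈ range (q + 1), ∑ s ∈ S, a (q - j + 1) s •
            (h ^ (q - j + 1) • Δ_[τ] ^[j] (y 0 s)
              - ∑ w ∈ range j, h ^ (q - w) •
                  ∑ r ∈ N, b (q - j + w + 1) s r • Δ_[τ] ^[w] (L r))
        + ∑ w ∈ range q, h ^ (q - 1 - w) • ∑ r ∈ N, b (w + 1) k r • Δ_[τ] ^[w + 1] (L r) := by
  have hdrift :
      ∑ j ∈ range (q + 1), ∑ s ∈ S, a (q - j + 1) s •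
          (h ^ (q - j + 1) • Δ_[τ] ^[j] (y 0 s)
            - ∑ w ∈ range j, h ^ (q - w) • ∑ r ∈ N, b (q - j + w + 1) s r • Δ_[τ] ^[w] (L r))
        = h ^ q • h • ∑ j ∈ range (q + 1), ∑ s ∈ S, a (q - j + 1) s • y j s := by
    simp only [smul_sum (s := range (q + 1)), smul_sum (s := S)]
    refine sum_congr rfl fun j hj => sum_congr rfl fun s hs => ?_
    rw [← pow_succ_smul_state_eq_of_euler_recursion (y := (y · s)) (b := (b · s))
        (hrec · · s hs) (mem_range_succ_iff.mp hj),
      smul_comm, pow_succ, mul_smul]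
  rw [fwdDiff_iter_succ_eq_of_euler_recursion (y := (y · k)) (b := (b · k)) (hrec · · k hk),
    hlast, hdrift, smul_add, neg_smul, smul_neg]
  abel

end EulerSystem

theorem smul_eq_fwdDiff_sub_sum_of_eq_div {K ρ : Type*} [Field K] {h : K} (hh0 : h ≠ 0)
    {N : Finset ρ} {y z : K → K} {c : ρ → K} {L : ρ → K → K}
    (hz : ∀ t, z t = (y (t + h) - y t - ∑ r ∈ N, c r * L r t) / h) :
    h • z = Δ_[h] y - ∑ r ∈ N, c r • L r := by
  ext t
  simp [hz t, mul_div_cancel₀ _ hh0, fwdDiff]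

theorem mcarma_transformation_relation_general {K : Type*} [Field K]
    (p d m : ℕ) (hp : 1 ≤ p)
    (h : K) (hh0 : h ≠ 0)
    (αc : ℕ → ℕ → K) (βc : ℕ → ℕ → K)
    (x : ℕ → K → K) (ΔL : ℕ → K → K)
    (hi : ∀ b k : ℕ, 1 ≤ b → b ≤ p - 1 → 1 ≤ k → k ≤ d → ∀ t : K,
      x ((b - 1) * d + k + d) t
        = (x ((b - 1) * d + k) (t + h) - x ((b - 1) * d + k) t
            - ∑ r ∈ Finset.Icc 1 m, βc (p - b) ((k - 1) * m + r) * ΔL r t) / h)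
    (hii : ∀ k : ℕ, 1 ≤ k → k ≤ d → ∀ t : K,
      x ((p - 1) * d + k) (t + h) - x ((p - 1) * d + k) t
        = -h * ∑ l ∈ Finset.Icc 1 p, ∑ s ∈ Finset.Icc 1 d,
              αc (p - l + 1) ((k - 1) * d + s) * x ((l - 1) * d + s) t
          + ∑ r ∈ Finset.Icc 1 m, βc 0 ((k - 1) * m + r) * ΔL r t) :
    ∀ k : ℕ, 1 ≤ k → k ≤ d → ∀ t : K,
      x k (t + (p : K) * h)
        = x k (t + ((p : K) - 1) * h)
          - h ^ p * ∑ s ∈ Finset.Icc 1 d, αc p ((k - 1) * d + s) * x s t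
          + h ^ (p - 1) * ∑ r ∈ Finset.Icc 1 m, βc 0 ((k - 1) * m + r) * ΔL r t
          - ∑ l ∈ Finset.Icc 2 p, ∑ s ∈ Finset.Icc 1 d,
              αc (p - l + 1) ((k - 1) * d + s) *
                (h ^ (p - l + 1) * ∑ n ∈ Finset.range l,
                    (-1 : K) ^ n * ((l - 1).choose n : K) *
                      x s (t + ((l : K) - 1 - n) * h)
                  - ∑ w ∈ Finset.range (l - 1), h ^ (p - w - 1) *
                      ∑ r ∈ Finset.Icc 1 m, βc (p - l + w + 1) ((s - 1) * m + r) *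
                        ∑ v ∈ Finset.range (w + 1),
                          (-1 : K) ^ v * (w.choose v : K) * ΔL r (t + ((w : K) - v) * h))
          - ∑ n ∈ Finset.Icc 1 (p - 1),
              (-1 : K) ^ n * ((p - 1).choose n : K) *
                (x k (t + ((p : K) - n) * h) - x k (t + ((p : K) - 1 - n) * h))
          + ∑ w ∈ Finset.range (p - 1), h ^ (p - w - 2) *
              ∑ r ∈ Finset.Icc 1 m, βc (w + 1) ((k - 1) * m + r) *
                ∑ v ∈ Finset.range (w + 1),
                  (-1 : K) ^ v * (w.choose v : K) *
                    (ΔL r (t + ((w : K) - v + 1) * h) - ΔL r (t + ((w : K) - v) * h)) := by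
  intro k hk1 hkd t
  obtain ⟨q, rfl⟩ : ∃ q, p = q + 1 := ⟨p - 1, by omega⟩
  have hrec : ∀ j < q, ∀ s ∈ Icc 1 d, h • x ((j + 1) * d + s) =
      Δ_[h] (x (j * d + s)) - ∑ r ∈ Icc 1 m, βc (q - j) ((s - 1) * m + r) • ΔL r := by
    intro j hj s hs
    obtain ⟨hs1, hsd⟩ := mem_Icc.mp hs
    refine smul_eq_fwdDiff_sub_sum_of_eq_div hh0 fun t => ?_
    simpa [add_mul, add_right_comm] using hi (j + 1) s (by omega) (by omega) hs1 hsd t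
  have hlast : Δ_[h] (x (q * d + k)) =
      -h • ∑ j ∈ range (q + 1), ∑ s ∈ Icc 1 d, αc (q - j + 1) ((k - 1) * d + s) • x (j * d + s)
        + ∑ r ∈ Icc 1 m, βc 0 ((k - 1) * m + r) • ΔL r := by
    ext t
    simpa [fwdDiff, sum_Icc_eq_sum_range _ 1 (q + 1)] using hii k hk1 hkd t
  have hrel := congrFun (fwdDiff_iter_eq_of_euler_system (y := fun j s => x (j * d + s))
    (a := fun j s => αc j ((k - 1) * d + s)) (b := fun κ s r => βc κ ((s - 1) * m + r))
    (mem_Icc.mpr ⟨hk1, hkd⟩) hrec hlast) t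
  simp only [fwdDiff_iter_succ_eq_sub_add_sum_Icc h (x k), sum_range_succ' _ q, Pi.add_apply,
    Pi.sub_apply, Pi.smul_apply, Finset.sum_apply, smul_eq_mul, zero_mul, zero_add, range_zero,
    sum_empty, sub_zero, Nat.sub_zero, Function.iterate_zero, id_eq, mul_left_comm _ (h ^ (q + 1)),
    ← mul_sum (Icc 1 d)] at hrel
  have hcast (j : ℕ) : ((j + 2 : ℕ) : K) - 1 = ((j + 1 : ℕ) : K) := by push_cast; ring
  have hpow (w : ℕ) : q + 1 - w - 1 = q - w ∧ q + 1 - w - 2 = q - 1 - w := by omega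
  rw [sum_Icc_eq_sum_range _ 2]
  simp only [Nat.reduceSubDiff, Nat.add_sub_cancel, hcast, hpow, Nat.cast_succ q,
    add_sub_cancel_right, ← fwdDiff_iter_succ_eq_sum_neg_one_pow_mul,
    ← fwdDiff_iter_eq_sum_neg_one_pow_mul]
  linear_combination hrel

/-- **Theorem 1 of the paper: the multivariate ARMA/CARMA transformation
relation.**
Fix `p ≥ 2`, `d ≥ 1`, `m ≥ 1` and a step size `h ∈ (0,1]`.  Coefficients
`αc j ((k-1)d+s)` (the `(k,s)` entry of `A_j`) and `βc κ ((k-1)m+r)` (the `(k,r)` entry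
of `β_{p−κ}`) are given, together with `x 1, …, x (pd) : ℝ → ℝ` and
`ΔL 1, …, ΔL m : ℝ → ℝ` satisfying hypotheses (i) and (ii) of the Euler-discretized
MCARMA state space system.  Then for every `k ∈ {1,…,d}` and `t ∈ ℝ` the transformation
relation displayed in Theorem 1 holds; in particular `x k (t + ph)` is a linear
combination of the `0` to `p−1` lagged values of `x 1,…,x d` and of `ΔL 1,…,ΔL m`. -/
theorem mcarma_transformation_relation
    (p d m : ℕ) (hp : 2 ≤ p) (hd : 1 ≤ d) (hm : 1 ≤ m)
    (h : ℝ) (hh0 : 0 < h) (hh1 : h ≤ 1)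
    (αc : ℕ → ℕ → ℝ) (βc : ℕ → ℕ → ℝ)
    (x : ℕ → ℝ → ℝ) (ΔL : ℕ → ℝ → ℝ)
    -- (i) Euler-discretized recursive equations (blocks 1,…,p−1)
    (hi : ∀ b k : ℕ, 1 ≤ b → b ≤ p - 1 → 1 ≤ k → k ≤ d → ∀ t : ℝ,
      x ((b - 1) * d + k + d) t
        = (x ((b - 1) * d + k) (t + h) - x ((b - 1) * d + k) t
            - ∑ r ∈ Finset.Icc 1 m, βc (p - b) ((k - 1) * m + r) * ΔL r t) / h)
    -- (ii) Euler-discretized autoregressive equations (block p)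
    (hii : ∀ k : ℕ, 1 ≤ k → k ≤ d → ∀ t : ℝ,
      x ((p - 1) * d + k) (t + h) - x ((p - 1) * d + k) t
        = -h * ∑ l ∈ Finset.Icc 1 p, ∑ s ∈ Finset.Icc 1 d,
              αc (p - l + 1) ((k - 1) * d + s) * x ((l - 1) * d + s) t
          + ∑ r ∈ Finset.Icc 1 m, βc 0 ((k - 1) * m + r) * ΔL r t) :
    ∀ k : ℕ, 1 ≤ k → k ≤ d → ∀ t : ℝ,
      x k (t + (p : ℝ) * h)
        = x k (t + ((p : ℝ) - 1) * h)
          - h ^ p * ∑ s ∈ Finset.Icc 1 d, αc p ((k - 1) * d + s) * x s t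
          + h ^ (p - 1) * ∑ r ∈ Finset.Icc 1 m, βc 0 ((k - 1) * m + r) * ΔL r t
          - ∑ l ∈ Finset.Icc 2 p, ∑ s ∈ Finset.Icc 1 d,
              αc (p - l + 1) ((k - 1) * d + s) *
                (h ^ (p - l + 1) * ∑ n ∈ Finset.range l,
                    (-1 : ℝ) ^ n * ((l - 1).choose n : ℝ) *
                      x s (t + ((l : ℝ) - 1 - n) * h)
                  - ∑ w ∈ Finset.range (l - 1), h ^ (p - w - 1) *
                      ∑ r ∈ Finset.Icc 1 m, βc (p - l + w + 1) ((s - 1) * m + r) *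
                        ∑ v ∈ Finset.range (w + 1),
                          (-1 : ℝ) ^ v * (w.choose v : ℝ) * ΔL r (t + ((w : ℝ) - v) * h))
          - ∑ n ∈ Finset.Icc 1 (p - 1),
              (-1 : ℝ) ^ n * ((p - 1).choose n : ℝ) *
                (x k (t + ((p : ℝ) - n) * h) - x k (t + ((p : ℝ) - 1 - n) * h))
          + ∑ w ∈ Finset.range (p - 1), h ^ (p - w - 2) *
              ∑ r ∈ Finset.Icc 1 m, βc (w + 1) ((k - 1) * m + r) *
                ∑ v ∈ Finset.range (w + 1),
                  (-1 : ℝ) ^ v * (w.choose v : ℝ) *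
                    (ΔL r (t + ((w : ℝ) - v + 1) * h) - ΔL r (t + ((w : ℝ) - v) * h)) := by
  exact mcarma_transformation_relation_general p d m (by omega) h hh0.ne' αc βc x ΔL hi hii
end
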